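/- Let $f_1,\dots,f_n$ be real-valued functions on $\mathbb R^2$ that are real analytic and not identically zero near the origin, let $\gamma_1,\dots,\gamma_n\in\mathbb R$, and let $E\subset\mathbb R^2$ be either a disk $\{x^2+y^2<r_0^2\}$ or a finite disjoint union of regions $E_i$, where each $E_i$ is one of the regions into which the disk $\{x^2+y^2<r_0^2\}$ is cut by two curves joining the origin to the circle $x^2+y^2=r_0^2$; each of these curves is half of a graph $y=h(|x|^{1/N})$ or $x=h(|y|^{1/N})$, followed from the origin until it first meets the circle, with $N$ a positive integer and $h$ real analytic, $h(0)=0$, and any two of all the curves involved meet only at the origin. Put $g=\chi_E\prod_{i=1}^n|f_i|^{\gamma_i}$ and assume that $g$ is integrable on a neighborhood of the origin. Let $v=(v_1,v_2)$ be a unit vector, $v^\perp=(v_2,-v_1)$ and $w=v^\perp$. Let $\varepsilon>0$, $d\in\{0,1\}$ be the ball exponents of $g$: there are $c_1,c_2,c_3>0$ with $$c_1r^{\varepsilon}|\ln r|^{d}\le\int_{x^2+y^2<r^2}g\,dx\,dy\le c_2r^{\varepsilon}|\ln r|^{d}\qquad(0<r<c_3).$$ Let $\delta_w>0$, $e_w\in\{0,1\}$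 be the strip exponents of $g$ in the direction $w$: there is $c_w>0$ such that for every $0<c<c_w$ there are $a_c,b_c>0$ with $$a_cr^{\delta_w}|\ln r|^{e_w}\le\int_{\{|(x,y)\cdot w|<r,\ |(x,y)\cdot w^\perp|<c\}}g\,dx\,dy\le b_cr^{\delta_w}|\ln r|^{e_w}\qquad(0<r<c).$$ Then there is $r_1>0$, depending only on $f_1,\dots,f_n$, $\gamma_1,\dots,\gamma_n$, $E$ and $v$, such that the following holds for every $0<r_B<r_1$, every wedge $B'=\{(s\cos\theta,s\sin\theta):0<s<r_B,\ \theta_1<\theta<\theta_2\}$ with $\theta_1<\theta_2\le\theta_1+2\pi$, and all constants $A$, $C$. Consider the complex-valued functions $\alpha$ that are $C^1$ on $\{0<x^2+y^2<r_B^2\}$, satisfy $|\alpha|\le A$ and $|\nabla\alpha(x,y)|\le A(x^2+y^2)^{-1/2}$ there, and for which, with $$I(t,u)=\int_{B'}\alpha(x,y)\,g(x,y)\,e^{i(tx+uy)}\,dx\,dy,$$ the estimate $$|I(t,u)|\le C\int_{B'}\bigl(1+|(t,u)\cdot v|\,|(x,y)|+|(t,u)\cdot v^\perp|\,|(x,y)\cdot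 v^\perp|\bigr)^{-1/2}g(x,y)\,dx\,dy$$ holds for all $(t,u)\in\mathbb R^2$. (a) For every $a>0$ there is a constant $C_a$, the same for all these $\alpha$, such that for all $(t,u)$ with $|(t,u)\cdot v|>a|(t,u)\cdot v^\perp|$ the quantity $|I(t,u)|$ is at most $C_a(2+|(t,u)|)^{-\varepsilon}(\ln(2+|(t,u)|))^{d}$ if $\varepsilon<1/2$, at most $C_a(2+|(t,u)|)^{-1/2}(\ln(2+|(t,u)|))^{d+1}$ if $\varepsilon=1/2$, and at most $C_a(2+|(t,u)|)^{-1/2}$ if $\varepsilon>1/2$. (b) There is a constant $D$, the same for all these $\alpha$, such that for all $(t,u)$ with $|(t,u)\cdot v|<|(t,u)\cdot v^\perp|$ the quantity $|I(t,u)|$ is at most $D(2+|(t,u)|)^{-\delta_w}(\ln(2+|(t,u)|))^{e_w}$ if $\delta_w<1/2$, at most $D(2+|(t,u)|)^{-1/2}(\ln(2+|(t,u)|))^{e_w+1}$ if $\delta_w=1/2$, and at most $D(2+|(t,u)|)^{-1/2}$ if $\delta_w>1/2$. -/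

import Mathlib

open MeasureTheory Set Filter
open scoped Topology

noncomputable section

/-- The Euclidean magnitude `|(x,y)| = √(x²+y²)` of a point of `ℝ²`. -/
def nrm2 (p : ℝ × ℝ) : ℝ := Real.sqrt (p.1 ^ 2 + p.2 ^ 2)

/-- The open Euclidean disk `{(x,y) : x²+y² < r²}` centered at the origin. -/
def disk2 (r : ℝ) : Set (ℝ × ℝ) := {p : ℝ × ℝ | p.1 ^ 2 + p.2 ^ 2 < r ^ 2}

/-- Dot product on `ℝ²`. -/
def dot2 (p q : ℝ × ℝ) : ℝ := p.1 * q.1 + p.2 * q.2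

/-- The perpendicular vector `v^⊥ = (v₂, −v₁)`. -/
def perp2 (v : ℝ × ℝ) : ℝ × ℝ := (v.2, -v.1)

/-- The function `g = χ_E · ∏ᵢ |fᵢ|^(γᵢ)`. -/
def stdFun (n : ℕ) (f : Fin n → ℝ × ℝ → ℝ) (γ : Fin n → ℝ) (E : Set (ℝ × ℝ)) :
    ℝ × ℝ → ℝ :=
  E.indicator fun p => ∏ i, |f i p| ^ (γ i)

/-- A boundary curve for the region `E`: half of a graph `y = h(|x|^{1/N})` or
`x = h(|y|^{1/N})` with `h` real analytic and `h 0 = 0`, followed from the origin until it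
first meets the circle of radius `r₀`. The sign `σ` says which half is taken, and `s₀` is
the value of `|x|` (resp. `|y|`) at the end point on the circle. -/
def IsPuiseuxArc (r₀ : ℝ) (C : Set (ℝ × ℝ)) : Prop :=
  ∃ (N : ℕ) (h : ℝ → ℝ) (s₀ σ : ℝ),
    0 < N ∧ 0 < s₀ ∧ (σ = 1 ∨ σ = -1) ∧
    AnalyticOnNhd ℝ h (Icc 0 (s₀ ^ ((N : ℝ)⁻¹))) ∧ h 0 = 0 ∧
    (∀ s ∈ Ico 0 s₀, s ^ 2 + h (s ^ ((N : ℝ)⁻¹)) ^ 2 < r₀ ^ 2) ∧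
    s₀ ^ 2 + h (s₀ ^ ((N : ℝ)⁻¹)) ^ 2 = r₀ ^ 2 ∧
    (C = (fun s : ℝ => (σ * s, h (s ^ ((N : ℝ)⁻¹)))) '' Icc 0 s₀ ∨
     C = (fun s : ℝ => (h (s ^ ((N : ℝ)⁻¹)), σ * s)) '' Icc 0 s₀)

/-- The admissible form of the set `E`: either a disk centered at the origin, or a finite
disjoint union of regions `Eᵢ`, where `Eᵢ` is one of the regions (connected components) into
which two boundary curves joining the origin to the circle of radius `r₀` cut the disk of
radius `r₀`, and all these boundary curves are pairwise disjoint except for the origin. -/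
def IsStdDomain (E : Set (ℝ × ℝ)) : Prop :=
  (∃ r₀ > (0 : ℝ), E = disk2 r₀) ∨
  (∃ r₀ > (0 : ℝ), ∃ (m : ℕ) (Es : Fin m → Set (ℝ × ℝ)) (Cs : Fin m → Fin 2 → Set (ℝ × ℝ)),
    E = (⋃ i, Es i) ∧
    (Pairwise fun i j => Disjoint (Es i) (Es j)) ∧
    (∀ i, ∃ p ∈ disk2 r₀ \ (Cs i 0 ∪ Cs i 1),
      Es i = connectedComponentIn (disk2 r₀ \ (Cs i 0 ∪ Cs i 1)) p) ∧
    (∀ i j, IsPuiseuxArc r₀ (Cs i j)) ∧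
    (Pairwise fun q q' : Fin m × Fin 2 => Cs q.1 q.2 ∩ Cs q'.1 q'.2 = {0}))

/-- The standard form: the `fᵢ` are real analytic and not identically zero near the origin,
`g = χ_E ∏ |fᵢ|^(γᵢ)` is integrable near the origin, and `E` is an admissible domain. -/
structure StandardForm (n : ℕ) (f : Fin n → ℝ × ℝ → ℝ) (γ : Fin n → ℝ)
    (E : Set (ℝ × ℝ)) : Prop where
  analytic : ∀ i, AnalyticAt ℝ (f i) 0
  nontriv : ∀ i, ¬ ∀ᶠ p in 𝓝 (0 : ℝ × ℝ), f i p = 0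
  integ : ∃ U ∈ 𝓝 (0 : ℝ × ℝ), IntegrableOn (stdFun n f γ E) U
  domain : IsStdDomain E

/-- `ε`, `d` are the ball exponents of `g`:
`c₁ r^ε |log r|^d ≤ ∫_{x²+y²<r²} g ≤ c₂ r^ε |log r|^d` for all small `r > 0`. -/
def BallBound (g : ℝ × ℝ → ℝ) (ε : ℝ) (d : ℕ) : Prop :=
  0 < ε ∧ d ≤ 1 ∧ ∃ c₁ > (0 : ℝ), ∃ c₂ > (0 : ℝ), ∃ c₃ > (0 : ℝ), ∀ r : ℝ, 0 < r → r < c₃ →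
    c₁ * r ^ ε * |Real.log r| ^ d ≤ (∫ p in disk2 r, g p) ∧
    (∫ p in disk2 r, g p) ≤ c₂ * r ^ ε * |Real.log r| ^ d

/-- The strip `{(x,y) : |(x,y)·w| < r, |(x,y)·w^⊥| < c}`. -/
def strip2 (w : ℝ × ℝ) (r c : ℝ) : Set (ℝ × ℝ) :=
  {p : ℝ × ℝ | |dot2 p w| < r ∧ |dot2 p (perp2 w)| < c}

/-- `δ`, `e` are the strip exponents of `g` in the direction `w`: for every small `c`, with
constants `a`, `b` that may depend on `c`,
`a r^δ |log r|^e ≤ ∫_{strip2 w r c} g ≤ b r^δ |log r|^e` for `0 < r < c`. -/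
def StripBound (g : ℝ × ℝ → ℝ) (w : ℝ × ℝ) (δ : ℝ) (e : ℕ) : Prop :=
  0 < δ ∧ e ≤ 1 ∧ ∃ cw > (0 : ℝ), ∀ c : ℝ, 0 < c → c < cw →
    ∃ a > (0 : ℝ), ∃ b > (0 : ℝ), ∀ r : ℝ, 0 < r → r < c →
      a * r ^ δ * |Real.log r| ^ e ≤ (∫ p in strip2 w r c, g p) ∧
      (∫ p in strip2 w r c, g p) ≤ b * r ^ δ * |Real.log r| ^ e

/-- The Euclidean length `|∇α|` of the gradient of `α` at `p`. -/
def gradNorm2 (α : ℝ × ℝ → ℂ) (p : ℝ × ℝ) : ℝ :=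
  Real.sqrt (‖fderiv ℝ α p (1, 0)‖ ^ 2 + ‖fderiv ℝ α p (0, 1)‖ ^ 2)

/-- On the disk of radius `ρ` without its center, `α` is `C¹`, `|α| ≤ A` and
`|∇α(x,y)| ≤ A (x²+y²)^{-1/2}`. -/
def AlphaBound (ρ : ℝ) (α : ℝ × ℝ → ℂ) (A : ℝ) : Prop :=
  ContDiffOn ℝ 1 α (disk2 ρ \ {0}) ∧
  ∀ p ∈ disk2 ρ \ {0}, ‖α p‖ ≤ A ∧ gradNorm2 α p ≤ A * (nrm2 p)⁻¹

/-- The oscillatory integral `∫_S α(x,y) g(x,y) e^{i(tx+uy)} dx dy`. -/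
def oscInt (α : ℝ × ℝ → ℂ) (g : ℝ × ℝ → ℝ) (S : Set (ℝ × ℝ)) (t u : ℝ) : ℂ :=
  ∫ p in S, α p * (g p : ℂ) * Complex.exp (Complex.I * ((t * p.1 + u * p.2 : ℝ) : ℂ))

/-- A wedge of radius `ρ` at the origin: a region bounded by two half-lines from the origin
and the circle of radius `ρ`. -/
def IsWedge (ρ : ℝ) (W : Set (ℝ × ℝ)) : Prop :=
  ∃ θ₁ θ₂ : ℝ, θ₁ < θ₂ ∧ θ₂ ≤ θ₁ + 2 * Real.pi ∧
    W = {p : ℝ × ℝ | ∃ s θ : ℝ, 0 < s ∧ s < ρ ∧ θ₁ < θ ∧ θ < θ₂ ∧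
      p = (s * Real.cos θ, s * Real.sin θ)}

/-- The estimate `|∫_B α g e^{i(tx+uy)}| ≤
C ∫_B (1 + |(t,u)·v| |(x,y)| + |(t,u)·v^⊥| |(x,y)·v^⊥|)^{-1/2} g` for all `(t,u)`. -/
def WedgeEstimate (α : ℝ × ℝ → ℂ) (g : ℝ × ℝ → ℝ) (B : Set (ℝ × ℝ)) (v : ℝ × ℝ)
    (C : ℝ) : Prop :=
  ∀ t u : ℝ, ‖oscInt α g B t u‖ ≤
    C * ∫ p in B,
      (1 + |dot2 (t, u) v| * nrm2 p +
        |dot2 (t, u) (perp2 v)| * |dot2 p (perp2 v)|) ^ (-(1 / 2 : ℝ)) * g p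

end


/-! For `Φ ≥ 1`, the layer cake formula writes `∫ Φ ^ (-κ) ∂μ` as the integral over `0 < t < 1` of
the masses of the sets `{Φ < t ^ (-1/κ)}`. If `N φ ≤ Φ`, such a set lies in the sublevel set of `φ`
of height `t ^ (-1/κ) / N`, so a mass bound `r ^ s |log r| ^ d` for `{φ < r}` gives the decay rate
in `N`. For the weight of the wedge estimate, where `κ = 1/2` and `N` is comparable to
`2 + |(t,u)|`, one takes `φ(p) = |p|` if `|(t,u)·v|` controls `|(t,u)·v^⊥|`, so that the sublevel
sets are disks, and `φ(p) = |p·v^⊥|` in the opposite case, where they are strips. -/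

/-- The rate at which a weight `(1 + N φ) ^ (-κ)` makes an integral decay in `N` when the sublevel
sets `{φ < r}` have mass of order `r ^ s * |log r| ^ d`: the smaller of the exponents `s` and `κ`
wins, and a tie costs a logarithm. -/
noncomputable def decayRate (κ s : ℝ) (d : ℕ) (N : ℝ) : ℝ :=
  if s < κ then N ^ (-s) * Real.log N ^ d
  else if s = κ then N ^ (-κ) * Real.log N ^ (d + 1)
  else N ^ (-κ)

section DecayRate

variable {κ s : ℝ} {d : ℕ} {N : ℝ}

lemma decayRate_of_lt (h : s < κ) : decayRate κ s d N = N ^ (-s) * Real.log N ^ d := if_pos h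

lemma decayRate_self : decayRate κ κ d N = N ^ (-κ) * Real.log N ^ (d + 1) := by
  rw [decayRate, if_neg (lt_irrefl κ), if_pos rfl]

lemma decayRate_of_gt (h : κ < s) : decayRate κ s d N = N ^ (-κ) := by
  rw [decayRate, if_neg h.not_gt, if_neg h.ne']

lemma decayRate_nonneg (hN : 1 ≤ N) : 0 ≤ decayRate κ s d N := by
  have hlog := Real.log_nonneg hN
  unfold decayRate
  split_ifs <;> positivity

lemma le_mul_decayRate_iff {x C : ℝ} :
    x ≤ C * decayRate κ s d N ↔
      (s < κ → x ≤ C * N ^ (-s) * Real.log N ^ d) ∧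
      (s = κ → x ≤ C * N ^ (-κ) * Real.log N ^ (d + 1)) ∧
      (κ < s → x ≤ C * N ^ (-κ)) := by
  rcases lt_trichotomy s κ with h | rfl | h
  · simp only [decayRate_of_lt h, h, h.ne, h.not_gt, mul_assoc, true_imp_iff, false_imp_iff,
      and_true]
  · simp only [decayRate_self, lt_irrefl, mul_assoc, true_imp_iff, false_imp_iff, and_true,
      true_and]
  · simp only [decayRate_of_gt h, h, h.ne', h.not_gt, true_imp_iff, false_imp_iff, true_and]

lemma log_pow_mul_decayRate_zero (h : s ≤ κ) :
    Real.log N ^ d * decayRate κ s 0 N = decayRate κ s d N := by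
  rcases h.lt_or_eq with h | rfl
  · rw [decayRate_of_lt h, decayRate_of_lt h]
    ring
  · rw [decayRate_self, decayRate_self]
    ring

lemma exists_rpow_neg_le_mul_decayRate (κ s : ℝ) (d : ℕ) :
    ∃ C > 0, ∀ N : ℝ, 2 ≤ N → N ^ (-κ) ≤ C * decayRate κ s d N := by
  have hlog2 : 0 < Real.log 2 := Real.log_pos one_lt_two
  have one_le (k : ℕ) {N : ℝ} (hN : 2 ≤ N) : 1 ≤ (Real.log 2)⁻¹ ^ k * Real.log N ^ k := by
    rw [← mul_pow, inv_mul_eq_div]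
    exact one_le_pow₀ ((one_le_div hlog2).2 (Real.log_le_log two_pos hN))
  rcases lt_trichotomy s κ with h | rfl | h
  · refine ⟨(Real.log 2)⁻¹ ^ d, by positivity, fun N hN => ?_⟩
    rw [decayRate_of_lt h, mul_left_comm]
    exact (Real.rpow_le_rpow_of_exponent_le (by linarith) (by linarith)).trans
      (le_mul_of_one_le_right (by positivity) (one_le d hN))
  · refine ⟨(Real.log 2)⁻¹ ^ (d + 1), by positivity, fun N hN => ?_⟩
    rw [decayRate_self, mul_left_comm]
    exact le_mul_of_one_le_right (by positivity) (one_le (d + 1) hN)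
  · exact ⟨1, one_pos, fun N _ => by rw [decayRate_of_gt h, one_mul]⟩

lemma exists_rpow_neg_mul_integral_le_mul_decayRate (hκ : 0 < κ) (s : ℝ) :
    ∃ C > 0, ∀ N : ℝ, 1 ≤ N →
      N ^ (-s) * ∫ t in N ^ (-κ)..1, t ^ (-(s / κ)) ≤ C * decayRate κ s 0 N := by
  have hσ {N : ℝ} (hN : 1 ≤ N) : 0 < N ^ (-κ) := Real.rpow_pos_of_pos (by linarith) _
  have integral_eq {N : ℝ} (hN : 1 ≤ N) (h : s ≠ κ) :
      ∫ t in N ^ (-κ)..1, t ^ (-(s / κ)) = (1 - N ^ (s - κ)) / (1 - s / κ) := by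
    have hexp : -κ * (-(s / κ) + 1) = s - κ := by field_simp; ring
    rw [integral_rpow (.inr ⟨?_, Set.notMem_uIcc_of_lt (hσ hN) one_pos⟩), Real.one_rpow,
      ← Real.rpow_mul (by linarith), hexp, neg_add_eq_sub]
    rwa [ne_eq, neg_inj, div_eq_one_iff_eq hκ.ne']
  rcases lt_trichotomy s κ with h | rfl | h
  · have hpos : 0 < 1 - s / κ := by rwa [sub_pos, div_lt_one hκ]
    refine ⟨(1 - s / κ)⁻¹, inv_pos.2 hpos, fun N hN => ?_⟩
    rw [integral_eq hN h.ne, decayRate_of_lt h, pow_zero, mul_one, mul_comm, div_eq_inv_mul]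
    gcongr
    exact mul_le_of_le_one_right (inv_nonneg.2 hpos.le)
      (sub_le_self _ (Real.rpow_nonneg (by linarith) _))
  · refine ⟨s, hκ, fun N hN => le_of_eq ?_⟩
    have hN0 : 0 < N := by linarith
    simp only [div_self hκ.ne', Real.rpow_neg_one]
    rw [integral_inv_of_pos (hσ hN) one_pos, decayRate_self, one_div, Real.log_inv,
      Real.log_rpow hN0]
    ring
  · have hpos : 0 < s / κ - 1 := by rwa [sub_pos, one_lt_div hκ]
    refine ⟨(s / κ - 1)⁻¹, inv_pos.2 hpos, fun N hN => ?_⟩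
    have hN0 : 0 < N := by linarith
    calc N ^ (-s) * ∫ t in N ^ (-κ)..1, t ^ (-(s / κ))
        = (s / κ - 1)⁻¹ * (N ^ (-κ) - N ^ (-s)) := by
          rw [integral_eq hN h.ne', ← neg_sub (N ^ (s - κ)), ← neg_sub (s / κ), neg_div_neg_eq,
            div_eq_inv_mul, mul_left_comm, mul_sub_one, ← Real.rpow_add hN0]
          ring_nf
      _ ≤ (s / κ - 1)⁻¹ * decayRate κ s 0 N := by
          rw [decayRate_of_gt h]
          gcongr
          exact sub_le_self _ (by positivity)

end DecayRate

lemma isBigO_rpow_mul_log_pow_of_lt {s s' : ℝ} (h : s' < s) (d : ℕ) :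
    (fun r : ℝ => r ^ s * Real.log r ^ d) =O[𝓝[>] 0] fun r => r ^ s' := by
  have hlog : (fun r : ℝ => Real.log r ^ d) =O[𝓝[>] 0] fun r => r ^ (s' - s) := by
    refine .trans (.of_norm_left ?_)
      (isLittleO_abs_log_rpow_rpow_nhdsGT_zero d (sub_neg.2 h)).isBigO
    simpa only [norm_pow, Real.norm_eq_abs, Real.rpow_natCast] using Asymptotics.isBigO_refl _ _
  refine ((Asymptotics.isBigO_refl (fun r : ℝ => r ^ s) _).mul hlog).congr' .rfl ?_
  filter_upwards [self_mem_nhdsWithin] with r (hr : 0 < r)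
  rw [← Real.rpow_add hr, add_sub_cancel]

/-- A surplus `s - κ > 0` absorbs the logarithm, so one may assume `d = 0` in that case. -/
lemma exists_isBigO_and_log_pow_mul_decayRate {G : ℝ → ℝ} {κ s : ℝ} {d : ℕ}
    (hG : G =O[𝓝[>] 0] fun r => r ^ s * Real.log r ^ d) :
    ∃ (s' : ℝ) (d' : ℕ), G =O[𝓝[>] 0] (fun r => r ^ s' * Real.log r ^ d') ∧
      ∀ N, Real.log N ^ d' * decayRate κ s' 0 N = decayRate κ s d N := by
  rcases le_or_gt s κ with h | h
  · exact ⟨s, d, hG, fun N => log_pow_mul_decayRate_zero h⟩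
  · obtain ⟨s', hκs', hs's⟩ := exists_between h
    refine ⟨s', 0, ?_, fun N => ?_⟩
    · simpa only [pow_zero, mul_one] using hG.trans (isBigO_rpow_mul_log_pow_of_lt hs's d)
    · rw [pow_zero, one_mul, decayRate_of_gt hκs', decayRate_of_gt h]

lemma abs_log_le_log_of_inv_le {N r : ℝ} (hN : 0 < N) (hNr : N⁻¹ ≤ r) (hr : r ≤ 1) :
    |Real.log r| ≤ Real.log N := by
  have hr0 : 0 < r := (inv_pos.2 hN).trans_le hNr
  rw [abs_of_nonpos (Real.log_nonpos hr0.le hr), ← Real.log_inv]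
  exact Real.log_le_log (inv_pos.2 hr0) (inv_le_of_inv_le₀ hN hNr)

lemma exists_le_mul_log_pow_mul_rpow_of_isBigO {G : ℝ → ℝ} {s : ℝ} {d : ℕ}
    (hG : G =O[𝓝[>] 0] fun r => r ^ s * Real.log r ^ d) :
    ∃ K > 0, ∃ c > 0, c ≤ 1 ∧ ∀ N r : ℝ, 0 < N → N⁻¹ ≤ r → r < c →
      G r ≤ K * Real.log N ^ d * r ^ s := by
  obtain ⟨K, hK, hGK⟩ := hG.exists_pos
  obtain ⟨c, hc, hcK⟩ := mem_nhdsGT_iff_exists_Ioo_subset.1 hGK.bound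
  refine ⟨K, hK, min c 1, lt_min hc one_pos, min_le_right _ _, fun N r hN hNr hrc => ?_⟩
  obtain ⟨hrc, hr1⟩ := lt_min_iff.1 hrc
  have hr : 0 < r := (inv_pos.2 hN).trans_le hNr
  have hlog := abs_log_le_log_of_inv_le hN hNr hr1.le
  calc G r ≤ ‖G r‖ := Real.le_norm_self _
    _ ≤ K * ‖r ^ s * Real.log r ^ d‖ := hcK ⟨hr, hrc⟩
    _ = K * (r ^ s * |Real.log r| ^ d) := by
        rw [norm_mul, norm_pow, Real.norm_eq_abs, Real.norm_eq_abs,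
          abs_of_pos (Real.rpow_pos_of_pos hr s)]
    _ ≤ K * (r ^ s * Real.log N ^ d) := by gcongr
    _ = K * Real.log N ^ d * r ^ s := by ring

lemma lt_rpow_neg_iff {κ t x : ℝ} (hκ : 0 < κ) (ht : 0 < t) (hx : 0 < x) :
    t < x ^ (-κ) ↔ x < t ^ (-κ⁻¹) := by
  simpa only [inv_neg, inv_inv] using
    Real.lt_rpow_inv_iff_of_neg ht hx (neg_lt_zero.2 (inv_pos.2 hκ))

lemma setIntegral_Ioi_le_mul_add_intervalIntegral {F ψ : ℝ → ℝ} {σ τ b M : ℝ} (hτ : 0 ≤ τ)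
    (hστ : σ ≤ τ) (hσb : σ ≤ b) (hF0 : ∀ t, 0 ≤ F t) (hFM : ∀ t, F t ≤ M)
    (hFψ : ∀ t, τ < t → t ≤ b → F t ≤ ψ t) (hFb : ∀ t, b < t → F t = 0)
    (hψ0 : ∀ t ∈ Ioc σ b, 0 ≤ ψ t) (hψ : IntervalIntegrable ψ volume σ b) :
    ∫ t in Ioi 0, F t ≤ τ * M + ∫ t in σ..b, ψ t := by
  set h₁ : ℝ → ℝ := (Ioc 0 τ).indicator fun _ => M
  set h₂ : ℝ → ℝ := (Ioc σ b).indicator ψ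
  have hh₁ : Integrable h₁ := (integrable_indicator_iff measurableSet_Ioc).2 <|
    integrableOn_const measure_Ioc_lt_top.ne
  have hh₂ : Integrable h₂ := (integrable_indicator_iff measurableSet_Ioc).2 <|
    (intervalIntegrable_iff_integrableOn_Ioc_of_le hσb).1 hψ
  have hh₁0 : 0 ≤ h₁ := indicator_nonneg fun t _ => (hF0 t).trans (hFM t)
  have hh₂0 : 0 ≤ h₂ := indicator_nonneg hψ0
  have le_add : ∀ t ∈ Ioi (0 : ℝ), F t ≤ h₁ t + h₂ t := by
    intro t (ht : 0 < t)
    rcases le_or_gt t τ with htτ | hτt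
    · refine le_add_of_le_of_nonneg ?_ (hh₂0 t)
      simpa only [h₁, indicator_of_mem (mem_Ioc.2 ⟨ht, htτ⟩)] using hFM t
    refine le_add_of_nonneg_of_le (hh₁0 t) ?_
    rcases le_or_gt t b with htb | hbt
    · simpa only [h₂, indicator_of_mem (mem_Ioc.2 ⟨hστ.trans_lt hτt, htb⟩)] using hFψ t hτt htb
    · exact (hFb t hbt).trans_le (hh₂0 t)
  calc ∫ t in Ioi 0, F t ≤ ∫ t in Ioi 0, (h₁ t + h₂ t) :=
        integral_mono_of_nonneg (ae_of_all _ hF0) (hh₁.add hh₂).integrableOn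
          (ae_restrict_of_forall_mem measurableSet_Ioi le_add)
    _ ≤ ∫ t, (h₁ t + h₂ t) := setIntegral_le_integral (hh₁.add hh₂)
          (ae_of_all _ (add_nonneg hh₁0 hh₂0))
    _ = τ * M + ∫ t in σ..b, ψ t := by
        rw [integral_add hh₁ hh₂, integral_indicator measurableSet_Ioc,
          integral_indicator measurableSet_Ioc, ← intervalIntegral.integral_of_le hσb,
          setIntegral_const, Real.volume_real_Ioc_of_le hτ, sub_zero, smul_eq_mul]

section Weight

variable {X : Type*} [MeasurableSpace X]

section FiniteMeasure

variable {μ : Measure X} [IsFiniteMeasure μ] {φ Φ : X → ℝ} {κ s N : ℝ} {d : ℕ}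

lemma measureReal_lt_rpow_neg_le (hκ : 0 < κ) (hN : 0 < N) (hΦ1 : ∀ᵐ x ∂μ, 1 ≤ Φ x)
    (hΦ : ∀ᵐ x ∂μ, N * φ x ≤ Φ x) {t : ℝ} (ht : 0 < t) :
    μ.real {x | t < Φ x ^ (-κ)} ≤ μ.real {x | φ x < t ^ (-κ⁻¹) / N} := by
  refine ENNReal.toReal_mono (measure_ne_top μ _) (measure_mono_ae ?_)
  filter_upwards [hΦ1, hΦ] with x hx1 hx (hxt : t < Φ x ^ (-κ))
  change φ x < _
  rw [lt_div_iff₀' hN]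
  exact hx.trans_lt ((lt_rpow_neg_iff hκ ht (by linarith)).1 hxt)

lemma measureReal_lt_rpow_neg_eq_zero (hκ : 0 < κ) (hΦ1 : ∀ᵐ x ∂μ, 1 ≤ Φ x) {t : ℝ}
    (ht : 1 ≤ t) : μ.real {x | t < Φ x ^ (-κ)} = 0 := by
  refine (measureReal_eq_zero_iff).2 (measure_eq_zero_iff_ae_notMem.2 ?_)
  filter_upwards [hΦ1] with x hx
  exact ((Real.rpow_le_one_of_one_le_of_nonpos hx (by linarith)).trans ht).not_gt

lemma integrable_rpow_neg (hκ : 0 < κ) (hΦm : AEMeasurable Φ μ) (hΦ1 : ∀ᵐ x ∂μ, 1 ≤ Φ x) :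
    Integrable (fun x => Φ x ^ (-κ)) μ := by
  refine .of_bound (hΦm.pow_const _).aestronglyMeasurable 1 ?_
  filter_upwards [hΦ1] with x hx
  rw [Real.norm_of_nonneg (Real.rpow_nonneg (by linarith) _)]
  exact Real.rpow_le_one_of_one_le_of_nonpos hx (by linarith)

lemma measureReal_lt_rpow_neg_le_mul_rpow {c L : ℝ} (hκ : 0 < κ) (hc : 0 < c) (hN : 0 < N)
    (hG : ∀ r, N⁻¹ ≤ r → r < c → μ.real {x | φ x < r} ≤ L * r ^ s) (hΦ1 : ∀ᵐ x ∂μ, 1 ≤ Φ x)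
    (hΦ : ∀ᵐ x ∂μ, N * φ x ≤ Φ x) {t : ℝ} (hct : (c * N) ^ (-κ) < t) (ht1 : t ≤ 1) :
    μ.real {x | t < Φ x ^ (-κ)} ≤ L * N ^ (-s) * t ^ (-(s / κ)) := by
  have hcN : 0 < c * N := mul_pos hc hN
  have ht : 0 < t := (Real.rpow_pos_of_pos hcN _).trans hct
  have inv_le : N⁻¹ ≤ t ^ (-κ⁻¹) / N := by
    rw [← one_div]
    gcongr
    exact Real.one_le_rpow_of_pos_of_le_one_of_nonpos ht ht1 (by simpa using hκ.le)
  have lt_c : t ^ (-κ⁻¹) / N < c := by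
    rw [div_lt_iff₀ hN, ← inv_neg]
    exact (Real.rpow_inv_lt_iff_of_neg ht hcN (neg_lt_zero.2 hκ)).2 hct
  calc μ.real {x | t < Φ x ^ (-κ)} ≤ μ.real {x | φ x < t ^ (-κ⁻¹) / N} :=
        measureReal_lt_rpow_neg_le hκ hN hΦ1 hΦ ht
    _ ≤ L * (t ^ (-κ⁻¹) / N) ^ s := hG _ inv_le lt_c
    _ = L * N ^ (-s) * t ^ (-(s / κ)) := by
        rw [Real.div_rpow (by positivity) hN.le, ← Real.rpow_mul ht.le, Real.rpow_neg hN.le,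
          neg_mul, inv_mul_eq_div]
        ring

lemma integral_rpow_neg_le {c L : ℝ} (hκ : 0 < κ) (hc : 0 < c) (hc1 : c ≤ 1) (hN : 1 ≤ N)
    (hL : 0 ≤ L) (hG : ∀ r, N⁻¹ ≤ r → r < c → μ.real {x | φ x < r} ≤ L * r ^ s)
    (hΦm : AEMeasurable Φ μ) (hΦ1 : ∀ᵐ x ∂μ, 1 ≤ Φ x) (hΦ : ∀ᵐ x ∂μ, N * φ x ≤ Φ x) :
    ∫ x, Φ x ^ (-κ) ∂μ ≤ (c * N) ^ (-κ) * μ.real univ +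
      L * N ^ (-s) * ∫ t in N ^ (-κ)..1, t ^ (-(s / κ)) := by
  have hN0 : 0 < N := by linarith
  have hσ : 0 < N ^ (-κ) := by positivity
  have hσ1 : N ^ (-κ) ≤ 1 := Real.rpow_le_one_of_one_le_of_nonpos hN (by linarith)
  have hστ : N ^ (-κ) ≤ (c * N) ^ (-κ) := Real.rpow_le_rpow_of_nonpos (mul_pos hc hN0)
    (mul_le_of_le_one_left hN0.le hc1) (neg_nonpos.2 hκ.le)
  calc ∫ x, Φ x ^ (-κ) ∂μ = ∫ t in Ioi 0, μ.real {x | t < Φ x ^ (-κ)} :=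
        (integrable_rpow_neg hκ hΦm hΦ1).integral_eq_integral_meas_lt <| by
          filter_upwards [hΦ1] with x hx using Real.rpow_nonneg (by linarith) _
    _ ≤ (c * N) ^ (-κ) * μ.real univ +
          ∫ t in N ^ (-κ)..1, L * N ^ (-s) * t ^ (-(s / κ)) := by
        refine setIntegral_Ioi_le_mul_add_intervalIntegral (hσ.le.trans hστ) hστ hσ1
          (fun _ => measureReal_nonneg) (fun _ => measureReal_mono (subset_univ _))
          (fun t => measureReal_lt_rpow_neg_le_mul_rpow hκ hc hN0 hG hΦ1 hΦ)
          (fun t ht => measureReal_lt_rpow_neg_eq_zero hκ hΦ1 ht.le) (fun t ht => ?_) ?_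
        · have := hσ.trans ht.1
          positivity
        · exact (intervalIntegral.intervalIntegrable_rpow
            (.inr (notMem_uIcc_of_lt hσ one_pos))).const_mul _
    _ = _ := by rw [intervalIntegral.integral_const_mul]

lemma exists_integral_rpow_neg_le_mul_decayRate (hκ : 0 < κ)
    (hφ : (fun r => μ.real {x | φ x < r}) =O[𝓝[>] 0] fun r => r ^ s * Real.log r ^ d) :
    ∃ C > 0, ∀ N : ℝ, 2 ≤ N → ∀ Φ : X → ℝ, AEMeasurable Φ μ → (∀ᵐ x ∂μ, 1 ≤ Φ x) →
      (∀ᵐ x ∂μ, N * φ x ≤ Φ x) → ∫ x, Φ x ^ (-κ) ∂μ ≤ C * decayRate κ s d N := by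
  obtain ⟨s', d', hφ', hrate⟩ := exists_isBigO_and_log_pow_mul_decayRate (κ := κ) hφ
  obtain ⟨K, hK, c, hc, hc1, hG⟩ := exists_le_mul_log_pow_mul_rpow_of_isBigO hφ'
  obtain ⟨C₁, hC₁, hmass⟩ := exists_rpow_neg_le_mul_decayRate κ s d
  obtain ⟨C₂, hC₂, htail⟩ := exists_rpow_neg_mul_integral_le_mul_decayRate hκ s'
  refine ⟨c ^ (-κ) * μ.real univ * C₁ + K * C₂, by positivity, fun N hN Φ hΦm hΦ1 hΦ => ?_⟩
  have hlog : 0 ≤ Real.log N := Real.log_nonneg (by linarith)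
  calc ∫ x, Φ x ^ (-κ) ∂μ
      ≤ (c * N) ^ (-κ) * μ.real univ +
          K * Real.log N ^ d' * N ^ (-s') * ∫ t in N ^ (-κ)..1, t ^ (-(s' / κ)) :=
        integral_rpow_neg_le hκ hc hc1 (by linarith) (by positivity)
          (fun r => hG N r (by linarith)) hΦm hΦ1 hΦ
    _ = c ^ (-κ) * μ.real univ * N ^ (-κ) +
          K * Real.log N ^ d' * (N ^ (-s') * ∫ t in N ^ (-κ)..1, t ^ (-(s' / κ))) := by
        rw [Real.mul_rpow hc.le (by linarith)]
        ring
    _ ≤ c ^ (-κ) * μ.real univ * (C₁ * decayRate κ s d N) +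
          K * Real.log N ^ d' * (C₂ * decayRate κ s' 0 N) := by
        gcongr c ^ (-κ) * μ.real univ * ?_ + K * Real.log N ^ d' * ?_
        · exact hmass N hN
        · exact htail N (by linarith)
    _ = (c ^ (-κ) * μ.real univ * C₁ + K * C₂) * decayRate κ s d N := by
        rw [← hrate N]
        ring

end FiniteMeasure

lemma exists_integral_rpow_neg_mul_le_mul_decayRate {ν : Measure X} [SFinite ν] {g φ : X → ℝ}
    {κ s A : ℝ} {d : ℕ} (hκ : 0 < κ) (hA : 1 ≤ A) (hg : Integrable g ν) (hg0 : 0 ≤ᵐ[ν] g)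
    (hφ : (fun r => ∫ x in {x | φ x < r}, g x ∂ν) =O[𝓝[>] 0] fun r => r ^ s * Real.log r ^ d) :
    ∃ C > 0, ∀ N : ℝ, 2 ≤ N → ∀ Φ : X → ℝ, AEMeasurable Φ ν → (∀ᵐ x ∂ν, 1 ≤ Φ x) →
      (∀ᵐ x ∂ν, N * φ x ≤ A * Φ x) → ∫ x, Φ x ^ (-κ) * g x ∂ν ≤ C * decayRate κ s d N := by
  set μ := ν.withDensity fun x => ENNReal.ofReal (g x)
  have hμν : μ ≪ ν := withDensity_absolutelyContinuous _ _
  have : IsFiniteMeasure μ := isFiniteMeasure_withDensity_ofReal hg.hasFiniteIntegral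
  have setIntegral_eq (S : Set X) (F : X → ℝ) : ∫ x in S, F x ∂μ = ∫ x in S, F x * g x ∂ν := by
    rw [setIntegral_withDensity_eq_setIntegral_toReal_smul₀' S
      hg.aemeasurable.ennreal_ofReal.restrict (ae_of_all _ fun _ => ENNReal.ofReal_lt_top)]
    refine integral_congr_ae (ae_restrict_of_ae ?_)
    filter_upwards [hg0] with x hx
    rw [ENNReal.toReal_ofReal hx, smul_eq_mul, mul_comm]
  have measureReal_eq (S : Set X) : μ.real S = ∫ x in S, g x ∂ν := by
    simpa only [setIntegral_const, smul_eq_mul, mul_one, one_mul] using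
      setIntegral_eq S fun _ => 1
  obtain ⟨C, hC, H⟩ := exists_integral_rpow_neg_le_mul_decayRate (μ := μ) hκ
    (by simpa only [measureReal_eq] using hφ)
  refine ⟨A ^ κ * C, by positivity, fun N hN Φ hΦm hΦ1 hΦ => ?_⟩
  calc ∫ x, Φ x ^ (-κ) * g x ∂ν = ∫ x, Φ x ^ (-κ) ∂μ := by
        simpa only [setIntegral_univ] using (setIntegral_eq univ fun x => Φ x ^ (-κ)).symm
    _ = A ^ κ * ∫ x, (A * Φ x) ^ (-κ) ∂μ := by
        rw [← integral_const_mul]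
        refine integral_congr_ae (hμν.ae_le ?_)
        filter_upwards [hΦ1] with x hx
        rw [Real.mul_rpow (by linarith) (by linarith), ← mul_assoc, ← Real.rpow_add (by linarith),
          add_neg_cancel, Real.rpow_zero, one_mul]
    _ ≤ A ^ κ * (C * decayRate κ s d N) := by
        gcongr
        refine H N hN _ ((hΦm.const_mul A).mono_ac hμν) (hμν.ae_le ?_) (hμν.ae_le hΦ)
        filter_upwards [hΦ1] with x hx using one_le_mul_of_one_le_of_one_le hA hx
    _ = A ^ κ * C * decayRate κ s d N := (mul_assoc _ _ _).symm

end Weight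

lemma isBigO_setIntegral_of_subset {X ι : Type*} [MeasurableSpace X] {ν : Measure X} {g : X → ℝ}
    {l : Filter ι} {S T : ι → Set X} (hg0 : 0 ≤ᵐ[ν] g) (hg : ∀ᶠ i in l, IntegrableOn g (T i) ν)
    (hST : ∀ᶠ i in l, S i ⊆ T i) :
    (fun i => ∫ x in S i, g x ∂ν) =O[l] fun i => ∫ x in T i, g x ∂ν := by
  refine Asymptotics.IsBigO.of_norm_eventuallyLE ?_
  filter_upwards [hg, hST] with i hi hSTi
  rw [Real.norm_of_nonneg (integral_nonneg_of_ae (ae_restrict_of_ae hg0))]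
  exact setIntegral_mono_set hi (ae_restrict_of_ae hg0) hSTi.eventuallyLE

lemma nrm2_nonneg (p : ℝ × ℝ) : 0 ≤ nrm2 p := Real.sqrt_nonneg _

lemma nrm2_lt_iff {p : ℝ × ℝ} {r : ℝ} (hr : 0 < r) : nrm2 p < r ↔ p ∈ disk2 r :=
  Real.sqrt_lt' hr

lemma measurableSet_disk2 (r : ℝ) : MeasurableSet (disk2 r) :=
  measurableSet_lt (by fun_prop) measurable_const

lemma disk2_mono {r ρ : ℝ} (hr : 0 ≤ r) (h : r ≤ ρ) : disk2 r ⊆ disk2 ρ :=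
  fun _ hp => lt_of_lt_of_le hp (pow_le_pow_left₀ hr h 2)

lemma exists_disk2_subset {U : Set (ℝ × ℝ)} (hU : U ∈ 𝓝 (0 : ℝ × ℝ)) :
    ∃ ρ > 0, disk2 ρ ⊆ U := by
  obtain ⟨ρ, hρ, hρU⟩ := Metric.mem_nhds_iff.1 hU
  refine ⟨ρ, hρ, fun p hp => hρU ?_⟩
  change p.1 ^ 2 + p.2 ^ 2 < ρ ^ 2 at hp
  rw [mem_ball_zero_iff, Prod.norm_def, max_lt_iff]
  exact ⟨abs_lt_of_sq_lt_sq (by nlinarith) hρ.le, abs_lt_of_sq_lt_sq (by nlinarith) hρ.le⟩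

lemma eventually_integrableOn_disk2 {g : ℝ × ℝ → ℝ} (hg : IntegrableAtFilter g (𝓝 0)) :
    ∀ᶠ r in 𝓝[>] 0, IntegrableOn g (disk2 r) := by
  obtain ⟨U, hU, hgU⟩ := hg
  obtain ⟨ρ, hρ, hρU⟩ := exists_disk2_subset hU
  filter_upwards [Ioo_mem_nhdsGT hρ] with r hr
  exact hgU.mono_set ((disk2_mono hr.1.le hr.2.le).trans hρU)

lemma IsWedge.subset_disk2 {ρ : ℝ} {W : Set (ℝ × ℝ)} (hW : IsWedge ρ W) : W ⊆ disk2 ρ := by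
  obtain ⟨θ₁, θ₂, -, -, rfl⟩ := hW
  rintro _ ⟨s, θ, hs, hsρ, -, -, rfl⟩
  calc (s * Real.cos θ) ^ 2 + (s * Real.sin θ) ^ 2 = s ^ 2 := by
        linear_combination s ^ 2 * Real.cos_sq_add_sin_sq θ
    _ < ρ ^ 2 := pow_lt_pow_left₀ hsρ hs.le two_ne_zero

lemma nrm2_perp2 (v : ℝ × ℝ) : nrm2 (perp2 v) = nrm2 v := by
  simp only [nrm2, perp2, neg_sq, add_comm]

lemma dot2_sq_add_dot2_perp2_sq {v : ℝ × ℝ} (hv : nrm2 v = 1) (p : ℝ × ℝ) :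
    dot2 p v ^ 2 + dot2 p (perp2 v) ^ 2 = p.1 ^ 2 + p.2 ^ 2 := by
  simp only [dot2, perp2]
  linear_combination (p.1 ^ 2 + p.2 ^ 2) * Real.sqrt_eq_one.1 hv

lemma nrm2_le_abs_dot2_add {v : ℝ × ℝ} (hv : nrm2 v = 1) (p : ℝ × ℝ) :
    nrm2 p ≤ |dot2 p v| + |dot2 p (perp2 v)| := by
  refine Real.sqrt_le_iff.2 ⟨by positivity, ?_⟩
  rw [← dot2_sq_add_dot2_perp2_sq hv, add_sq, sq_abs, sq_abs]
  linarith [mul_nonneg (abs_nonneg (dot2 p v)) (abs_nonneg (dot2 p (perp2 v)))]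

lemma abs_dot2_le_nrm2 {v : ℝ × ℝ} (hv : nrm2 v = 1) (p : ℝ × ℝ) : |dot2 p v| ≤ nrm2 p :=
  Real.abs_le_sqrt <| by
    rw [← dot2_sq_add_dot2_perp2_sq hv]
    exact le_add_of_nonneg_right (sq_nonneg _)

lemma strip2_subset_disk2 {w : ℝ × ℝ} (hw : nrm2 w = 1) {r c : ℝ} (hc : 0 < c) (hr : r ≤ c) :
    strip2 w r c ⊆ disk2 (2 * c) := fun p hp => by
  refine (nrm2_lt_iff (by positivity)).1 ((nrm2_le_abs_dot2_add hw p).trans_lt ?_)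
  linarith [hp.1, hp.2]

lemma isBigO_rpow_mul_log_pow_of_le {G : ℝ → ℝ} {s C c : ℝ} {d : ℕ} (hG : ∀ r, 0 ≤ G r)
    (hc : 0 < c) (h : ∀ r, 0 < r → r < c → G r ≤ C * r ^ s * |Real.log r| ^ d) :
    G =O[𝓝[>] 0] fun r => r ^ s * Real.log r ^ d := by
  refine .of_bound C ?_
  filter_upwards [Ioo_mem_nhdsGT hc] with r hr
  rw [Real.norm_of_nonneg (hG r), norm_mul, norm_pow,
    Real.norm_of_nonneg (Real.rpow_nonneg hr.1.le s), Real.norm_eq_abs, ← mul_assoc]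
  exact h r hr.1 hr.2

lemma BallBound.isBigO {g : ℝ × ℝ → ℝ} {ε : ℝ} {d : ℕ} (hg0 : 0 ≤ᵐ[volume] g)
    (h : BallBound g ε d) :
    (fun r => ∫ p in disk2 r, g p) =O[𝓝[>] 0] fun r => r ^ ε * Real.log r ^ d := by
  obtain ⟨-, -, c₁, -, c₂, -, c₃, hc₃, h⟩ := h
  exact isBigO_rpow_mul_log_pow_of_le
    (fun _ => integral_nonneg_of_ae (ae_restrict_of_ae hg0)) hc₃ fun r hr hrc => (h r hr hrc).2

lemma StripBound.eventually_isBigO {g : ℝ × ℝ → ℝ} {w : ℝ × ℝ} {δ : ℝ} {e : ℕ}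
    (hg0 : 0 ≤ᵐ[volume] g) (h : StripBound g w δ e) :
    ∀ᶠ c in 𝓝[>] 0,
      (fun r => ∫ p in strip2 w r c, g p) =O[𝓝[>] 0] fun r => r ^ δ * Real.log r ^ e := by
  obtain ⟨-, -, cw, hcw, h⟩ := h
  filter_upwards [Ioo_mem_nhdsGT hcw] with c hc
  obtain ⟨a, -, b, -, h⟩ := h c hc.1 hc.2
  exact isBigO_rpow_mul_log_pow_of_le
    (fun _ => integral_nonneg_of_ae (ae_restrict_of_ae hg0)) hc.1 fun r hr hrc => (h r hr hrc).2

/-- The weight `1 + |ζ·v| |p| + |ζ·v^⊥| |p·v^⊥|` of the wedge estimate at frequency `ζ = (t,u)`. -/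
noncomputable def wedgeWeight (v ζ p : ℝ × ℝ) : ℝ :=
  1 + |dot2 ζ v| * nrm2 p + |dot2 ζ (perp2 v)| * |dot2 p (perp2 v)|

lemma measurable_wedgeWeight (v ζ : ℝ × ℝ) : Measurable (wedgeWeight v ζ) := by
  have : Continuous (wedgeWeight v ζ) := by
    unfold wedgeWeight nrm2 dot2
    fun_prop
  exact this.measurable

lemma one_add_mul_nrm2_le_wedgeWeight (v ζ p : ℝ × ℝ) :
    1 + |dot2 ζ v| * nrm2 p ≤ wedgeWeight v ζ p :=
  le_add_of_nonneg_right (by positivity)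

lemma one_add_mul_abs_dot2_le_wedgeWeight (v ζ p : ℝ × ℝ) :
    1 + |dot2 ζ (perp2 v)| * |dot2 p (perp2 v)| ≤ wedgeWeight v ζ p := by
  have := mul_nonneg (abs_nonneg (dot2 ζ v)) (nrm2_nonneg p)
  rw [wedgeWeight]
  linarith

lemma one_le_wedgeWeight (v ζ p : ℝ × ℝ) : 1 ≤ wedgeWeight v ζ p :=
  (le_add_of_nonneg_right (by positivity)).trans (one_add_mul_abs_dot2_le_wedgeWeight v ζ p)

lemma two_add_nrm2_mul_nrm2_le {v ζ p : ℝ × ℝ} {a : ℝ} (hv : nrm2 v = 1) (ha : 0 < a)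
    (hζ : a * |dot2 ζ (perp2 v)| < |dot2 ζ v|) (hp : nrm2 p ≤ 1) :
    (2 + nrm2 ζ) * nrm2 p ≤ (2 + a⁻¹) * wedgeWeight v ζ p := by
  have ha' : 0 < a⁻¹ := inv_pos.2 ha
  have hperp : |dot2 ζ (perp2 v)| ≤ a⁻¹ * |dot2 ζ v| := (le_inv_mul_iff₀ ha).2 hζ.le
  have hnrm : nrm2 ζ ≤ (1 + a⁻¹) * |dot2 ζ v| := by
    linarith [nrm2_le_abs_dot2_add hv ζ]
  have hp0 := nrm2_nonneg p
  calc (2 + nrm2 ζ) * nrm2 p ≤ 2 * 1 + (1 + a⁻¹) * |dot2 ζ v| * nrm2 p := by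
        rw [add_mul]
        gcongr
    _ ≤ (2 + a⁻¹) * (1 + |dot2 ζ v| * nrm2 p) := by
        linarith [mul_nonneg (abs_nonneg (dot2 ζ v)) hp0]
    _ ≤ (2 + a⁻¹) * wedgeWeight v ζ p := by
        gcongr
        exact one_add_mul_nrm2_le_wedgeWeight v ζ p

lemma two_add_nrm2_mul_abs_dot2_perp2_le {v ζ p : ℝ × ℝ} (hv : nrm2 v = 1)
    (hζ : |dot2 ζ v| < |dot2 ζ (perp2 v)|) (hp : nrm2 p ≤ 1) :
    (2 + nrm2 ζ) * |dot2 p (perp2 v)| ≤ 2 * wedgeWeight v ζ p := by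
  have hpw : |dot2 p (perp2 v)| ≤ 1 :=
    (abs_dot2_le_nrm2 ((nrm2_perp2 v).trans hv) p).trans hp
  have hnrm : nrm2 ζ ≤ 2 * |dot2 ζ (perp2 v)| := by
    linarith [nrm2_le_abs_dot2_add hv ζ]
  calc (2 + nrm2 ζ) * |dot2 p (perp2 v)|
      ≤ 2 * 1 + 2 * |dot2 ζ (perp2 v)| * |dot2 p (perp2 v)| := by
        rw [add_mul]
        gcongr
    _ = 2 * (1 + |dot2 ζ (perp2 v)| * |dot2 p (perp2 v)|) := by ring
    _ ≤ 2 * wedgeWeight v ζ p := by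
        gcongr
        exact one_add_mul_abs_dot2_le_wedgeWeight v ζ p

lemma WedgeEstimate.norm_oscInt_le {α : ℝ × ℝ → ℂ} {g : ℝ × ℝ → ℝ} {B D : Set (ℝ × ℝ)}
    {v : ℝ × ℝ} {C : ℝ} (h : WedgeEstimate α g B v C) (hg0 : 0 ≤ᵐ[volume] g)
    (hBD : B ⊆ D) (hg : IntegrableOn g D) (t u : ℝ) :
    ‖oscInt α g B t u‖ ≤ |C| * ∫ p in D, wedgeWeight v (t, u) p ^ (-(1 / 2 : ℝ)) * g p := by
  have hω0 (p : ℝ × ℝ) : 0 ≤ wedgeWeight v (t, u) p ^ (-(1 / 2 : ℝ)) :=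
    Real.rpow_nonneg (zero_le_one.trans (one_le_wedgeWeight v (t, u) p)) _
  have hωg0 : 0 ≤ᵐ[volume] fun p => wedgeWeight v (t, u) p ^ (-(1 / 2 : ℝ)) * g p := by
    filter_upwards [hg0] with p hp using mul_nonneg (hω0 p) hp
  have hωg : IntegrableOn (fun p => wedgeWeight v (t, u) p ^ (-(1 / 2 : ℝ)) * g p) D :=
    hg.bdd_mul (c := 1) ((measurable_wedgeWeight v (t, u)).pow_const _).aestronglyMeasurable <|
      ae_of_all _ fun p => by
        rw [Real.norm_of_nonneg (hω0 p)]
        exact Real.rpow_le_one_of_one_le_of_nonpos (one_le_wedgeWeight v (t, u) p) (by norm_num)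
  calc ‖oscInt α g B t u‖
      ≤ C * ∫ p in B, wedgeWeight v (t, u) p ^ (-(1 / 2 : ℝ)) * g p := h t u
    _ ≤ |C| * ∫ p in B, wedgeWeight v (t, u) p ^ (-(1 / 2 : ℝ)) * g p :=
        mul_le_mul_of_nonneg_right (le_abs_self C) (integral_nonneg_of_ae (ae_restrict_of_ae hωg0))
    _ ≤ |C| * ∫ p in D, wedgeWeight v (t, u) p ^ (-(1 / 2 : ℝ)) * g p :=
        mul_le_mul_of_nonneg_left (setIntegral_mono_set hωg (ae_restrict_of_ae hωg0)
          hBD.eventuallyLE) (abs_nonneg C)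

lemma exists_norm_oscInt_le_mul_decayRate {g φ : ℝ × ℝ → ℝ} {v : ℝ × ℝ} {R A s : ℝ} {d : ℕ}
    (hA : 1 ≤ A) (hg0 : 0 ≤ᵐ[volume] g) (hg : IntegrableOn g (disk2 R))
    (hφ : (fun r => ∫ p in {p | φ p < r} ∩ disk2 R, g p) =O[𝓝[>] 0]
      fun r => r ^ s * Real.log r ^ d) (C₀ : ℝ) :
    ∃ C > 0, ∀ B ⊆ disk2 R, ∀ α : ℝ × ℝ → ℂ, WedgeEstimate α g B v C₀ → ∀ t u : ℝ,
      (∀ p ∈ disk2 R, (2 + nrm2 (t, u)) * φ p ≤ A * wedgeWeight v (t, u) p) →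
        ‖oscInt α g B t u‖ ≤ C * decayRate (1 / 2) s d (2 + nrm2 (t, u)) := by
  obtain ⟨C, hC, H⟩ := exists_integral_rpow_neg_mul_le_mul_decayRate (κ := 1 / 2) (by norm_num)
    hA hg (ae_restrict_of_ae hg0)
    (by simpa only [Measure.restrict_restrict' (measurableSet_disk2 R)] using hφ)
  refine ⟨(|C₀| + 1) * C, by positivity, fun B hB α hα t u hΦ => ?_⟩
  have hN : 2 ≤ 2 + nrm2 (t, u) := le_add_of_nonneg_right (nrm2_nonneg _)
  have hrate : 0 ≤ decayRate (1 / 2) s d (2 + nrm2 (t, u)) := decayRate_nonneg (by linarith)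
  calc ‖oscInt α g B t u‖
      ≤ |C₀| * ∫ p in disk2 R, wedgeWeight v (t, u) p ^ (-(1 / 2 : ℝ)) * g p :=
        hα.norm_oscInt_le hg0 hB hg t u
    _ ≤ |C₀| * (C * decayRate (1 / 2) s d (2 + nrm2 (t, u))) := by
        gcongr
        exact H _ hN _ (measurable_wedgeWeight v (t, u)).aemeasurable
          (ae_of_all _ (one_le_wedgeWeight v (t, u)))
          (ae_restrict_of_forall_mem (measurableSet_disk2 R) hΦ)
    _ ≤ (|C₀| + 1) * C * decayRate (1 / 2) s d (2 + nrm2 (t, u)) := by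
        rw [mul_assoc]
        gcongr
        exact le_add_of_nonneg_right zero_le_one

theorem wedge_decay_estimates_general {g : ℝ × ℝ → ℝ} {v : ℝ × ℝ} {ε δ : ℝ} {d e : ℕ}
    (hv : nrm2 v = 1) (hg0 : 0 ≤ᵐ[volume] g) (hg : IntegrableAtFilter g (𝓝 0))
    (hball : (fun r => ∫ p in disk2 r, g p) =O[𝓝[>] 0] fun r => r ^ ε * Real.log r ^ d)
    (hstrip : ∀ᶠ c in 𝓝[>] 0, (fun r => ∫ p in strip2 (perp2 v) r c, g p) =O[𝓝[>] 0]
      fun r => r ^ δ * Real.log r ^ e) :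
    ∃ R > 0, ∀ C₀ : ℝ,
      (∀ a > 0, ∃ C > 0, ∀ B ⊆ disk2 R, ∀ α : ℝ × ℝ → ℂ, WedgeEstimate α g B v C₀ →
        ∀ t u : ℝ, a * |dot2 (t, u) (perp2 v)| < |dot2 (t, u) v| →
          ‖oscInt α g B t u‖ ≤ C * decayRate (1 / 2) ε d (2 + nrm2 (t, u))) ∧
      (∃ C > 0, ∀ B ⊆ disk2 R, ∀ α : ℝ × ℝ → ℂ, WedgeEstimate α g B v C₀ →
        ∀ t u : ℝ, |dot2 (t, u) v| < |dot2 (t, u) (perp2 v)| →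
          ‖oscInt α g B t u‖ ≤ C * decayRate (1 / 2) δ e (2 + nrm2 (t, u))) := by
  have hw : nrm2 (perp2 v) = 1 := (nrm2_perp2 v).trans hv
  have hg' := eventually_integrableOn_disk2 hg
  obtain ⟨ρ, hgρ, hρ : 0 < ρ⟩ := (hg'.and self_mem_nhdsWithin).exists
  obtain ⟨R, hstripR, hR, hRρ⟩ :=
    (hstrip.and (Ioo_mem_nhdsGT (show (0 : ℝ) < min 1 (ρ / 2) by positivity))).exists
  obtain ⟨hR1, hRρ⟩ := lt_min_iff.1 hRρ
  have hgR : IntegrableOn g (disk2 R) := hgρ.mono_set (disk2_mono hR.le (by linarith))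
  have nrm2_lt {p : ℝ × ℝ} (hp : p ∈ disk2 R) : nrm2 p < R := (nrm2_lt_iff hR).2 hp
  have hballR : (fun r => ∫ p in {p | nrm2 p < r} ∩ disk2 R, g p) =O[𝓝[>] 0]
      fun r => r ^ ε * Real.log r ^ d := by
    refine (isBigO_setIntegral_of_subset hg0 hg' ?_).trans hball
    filter_upwards [self_mem_nhdsWithin] with r hr p hp using (nrm2_lt_iff hr).1 hp.1
  have hstripR' : (fun r => ∫ p in {p | |dot2 p (perp2 v)| < r} ∩ disk2 R, g p) =O[𝓝[>] 0]
      fun r => r ^ δ * Real.log r ^ e := by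
    refine (isBigO_setIntegral_of_subset hg0 ?_ (.of_forall fun r p hp => ?_)).trans hstripR
    · filter_upwards [Ioo_mem_nhdsGT hR] with r hr
      exact hgρ.mono_set ((strip2_subset_disk2 hw hR hr.2.le).trans
        (disk2_mono (by positivity) (by linarith)))
    · exact ⟨hp.1, (abs_dot2_le_nrm2 ((nrm2_perp2 _).trans hw) p).trans_lt (nrm2_lt hp.2)⟩
  refine ⟨R, hR, fun C₀ => ⟨fun a ha => ?_, ?_⟩⟩
  · obtain ⟨C, hC, H⟩ := exists_norm_oscInt_le_mul_decayRate (v := v) (A := 2 + a⁻¹)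
      (by linarith [inv_pos.2 ha]) hg0 hgR hballR C₀
    exact ⟨C, hC, fun B hB α hα t u hζ => H B hB α hα t u fun p hp =>
      two_add_nrm2_mul_nrm2_le hv ha hζ ((nrm2_lt hp).trans hR1).le⟩
  · obtain ⟨C, hC, H⟩ := exists_norm_oscInt_le_mul_decayRate (v := v) one_le_two hg0 hgR hstripR' C₀
    exact ⟨C, hC, fun B hB α hα t u hζ => H B hB α hα t u fun p hp =>
      two_add_nrm2_mul_abs_dot2_perp2_le hv hζ ((nrm2_lt hp).trans hR1).le⟩

lemma stdFun_nonneg (n : ℕ) (f : Fin n → ℝ × ℝ → ℝ) (γ : Fin n → ℝ) (E : Set (ℝ × ℝ)) :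
    0 ≤ stdFun n f γ E :=
  indicator_nonneg fun _ _ => Finset.prod_nonneg fun _ _ => by positivity


/-- The threshold `r₁` makes precise that the wedge lies in a small disk; the constants `Ca`
and `D` do not depend on `α` except through `A` and `C₀`. -/
theorem wedge_decay_estimates {n : ℕ} (f : Fin n → ℝ × ℝ → ℝ) (γ : Fin n → ℝ)
    (E : Set (ℝ × ℝ)) (hsf : StandardForm n f γ E)
    (v : ℝ × ℝ) (hv : nrm2 v = 1)
    (ε : ℝ) (d : ℕ) (hball : BallBound (stdFun n f γ E) ε d)
    (δw : ℝ) (ew : ℕ) (hstrip : StripBound (stdFun n f γ E) (perp2 v) δw ew) :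
    ∃ r₁ > (0 : ℝ), ∀ rB : ℝ, 0 < rB → rB < r₁ → ∀ B' : Set (ℝ × ℝ), IsWedge rB B' →
      ∀ A C₀ : ℝ,
        (∀ a > (0 : ℝ), ∃ Ca > (0 : ℝ), ∀ α : ℝ × ℝ → ℂ, AlphaBound rB α A →
          WedgeEstimate α (stdFun n f γ E) B' v C₀ →
          ∀ t u : ℝ, a * |dot2 (t, u) (perp2 v)| < |dot2 (t, u) v| →
            (ε < 1 / 2 →
              ‖oscInt α (stdFun n f γ E) B' t u‖ ≤
                Ca * (2 + nrm2 (t, u)) ^ (-ε) * (Real.log (2 + nrm2 (t, u))) ^ d) ∧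
            (ε = 1 / 2 →
              ‖oscInt α (stdFun n f γ E) B' t u‖ ≤
                Ca * (2 + nrm2 (t, u)) ^ (-(1 / 2 : ℝ)) *
                  (Real.log (2 + nrm2 (t, u))) ^ (d + 1)) ∧
            (1 / 2 < ε →
              ‖oscInt α (stdFun n f γ E) B' t u‖ ≤
                Ca * (2 + nrm2 (t, u)) ^ (-(1 / 2 : ℝ)))) ∧
        (∃ D > (0 : ℝ), ∀ α : ℝ × ℝ → ℂ, AlphaBound rB α A →
          WedgeEstimate α (stdFun n f γ E) B' v C₀ →
          ∀ t u : ℝ, |dot2 (t, u) v| < |dot2 (t, u) (perp2 v)| →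
            (δw < 1 / 2 →
              ‖oscInt α (stdFun n f γ E) B' t u‖ ≤
                D * (2 + nrm2 (t, u)) ^ (-δw) * (Real.log (2 + nrm2 (t, u))) ^ ew) ∧
            (δw = 1 / 2 →
              ‖oscInt α (stdFun n f γ E) B' t u‖ ≤
                D * (2 + nrm2 (t, u)) ^ (-(1 / 2 : ℝ)) *
                  (Real.log (2 + nrm2 (t, u))) ^ (ew + 1)) ∧
            (1 / 2 < δw →
              ‖oscInt α (stdFun n f γ E) B' t u‖ ≤
                D * (2 + nrm2 (t, u)) ^ (-(1 / 2 : ℝ)))) := by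
  
  have hg0 := ae_of_all volume (stdFun_nonneg n f γ E)
  obtain ⟨R, hR, H⟩ := wedge_decay_estimates_general hv hg0 hsf.integ (hball.isBigO hg0)
    (hstrip.eventually_isBigO hg0)
  refine ⟨R, hR, fun rB hrB hrBR B' hB' A C₀ => ?_⟩
  have hB'R : B' ⊆ disk2 R := hB'.subset_disk2.trans (disk2_mono hrB.le hrBR.le)
  simp only [← le_mul_decayRate_iff]
  exact ⟨fun a ha => ((H C₀).1 a ha).imp fun _ hC => hC.imp_right fun h α _ => h B' hB'R α,
    (H C₀).2.imp fun _ hC => hC.imp_right fun h α _ => h B' hB'R α⟩
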